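/- arXiv:0903.3446 — 2 statements merged into one kernel-verified Lean document; each statement's English description precedes it below -/
import Mathlib

section
/- For every ξ' ∈ ℝ^N, every λ' > 0 and every y ∈ ℝ^N, with u(y) = (λ'/(λ'² + |y−ξ'|²))^{(N−4)/2}, the following pointwise identity holds: Σ_{i,j,m,s=1}^N [ H̄_{ms}(y)(∂_s H̄_{ij})(y) − H̄_{si}(y)(∂_s H̄_{mj})(y) + H̄_{sj}(y)(∂_i H̄_{ms})(y) − H̄_{ms}(y)(∂_i H̄_{sj})(y) ] · ∂_m( (∂_i u)(∂_j u) )(y) = 0. -/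
open scoped BigOperators

noncomputable section

/-- The partial derivative `∂f/∂y_i` of a function on Euclidean space. -/
def pd (N : ℕ) (i : Fin N) (f : EuclideanSpace ℝ (Fin N) → ℝ) :
    EuclideanSpace ℝ (Fin N) → ℝ :=
  fun y => fderiv ℝ f y (EuclideanSpace.single i 1)

/-- `H_{ij}(y) = Σ_{p,q} W_{ipjq} y_p y_q`. -/
def Hmat (N : ℕ) (W : Fin N → Fin N → Fin N → Fin N → ℝ) (i j : Fin N)
    (y : EuclideanSpace ℝ (Fin N)) : ℝ :=
  ∑ p : Fin N, ∑ q : Fin N, W i p j q * y p * y q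

/-- `H̄_{ij}(y) = f(|y|²) H_{ij}(y)`. -/
def Hbar (N : ℕ) (W : Fin N → Fin N → Fin N → Fin N → ℝ) (f : ℝ → ℝ) (i j : Fin N)
    (y : EuclideanSpace ℝ (Fin N)) : ℝ :=
  f (‖y‖ ^ 2) * Hmat N W i j y

/-!
For radial `u` and `z = y - ξ'`, the last factor has the form
`∂_m (∂_i u ∂_j u) = c z_m z_i z_j + b (δ_{im} z_j + z_i δ_{jm})`.
The bracket, summed over `s`, is a sum of two tensors, one antisymmetric in `(i, m)` and one
antisymmetric in `(j, m)`, so its contraction with `z_m z_i z_j` vanishes. Since `H̄` is trace-free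
and divergence-free, the `(i, m)` and `(j, m)` traces of the bracket are the vectors
`∓ Σ_{s,t} H̄_{st} ∂_t H̄_{sk}`, and these cancel.
-/

open scoped Topology

theorem sum_sum_sum_reverse {ι M : Type*} [Fintype ι] [AddCommMonoid M] (F : ι → ι → ι → M) :
    ∑ i, ∑ j, ∑ m, F i j m = ∑ i, ∑ j, ∑ m, F m j i :=
  (Finset.sum_comm.trans (Finset.sum_congr rfl fun _ _ => Finset.sum_comm)).trans Finset.sum_comm

section BracketTensor

variable {ι R : Type*} [Fintype ι] [CommRing R]

/-- The bracket of the identity, summed over `s`, as a tensor in `i, j, m`. It depends only on the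
values `h i j = H̄_{ij}(y)` and the first derivatives `d s i j = ∂_s H̄_{ij}(y)`. -/
def bracketTensor (h : ι → ι → R) (d : ι → ι → ι → R) (i j m : ι) : R :=
  ∑ s, (h m s * d s i j - h s i * d s m j + h s j * d i m s - h m s * d i s j)

theorem sum_sub_swap_left_mul_symm (F S : ι → ι → ι → R) (hS : ∀ i j m, S i j m = S m j i) :
    ∑ i, ∑ j, ∑ m, (F i j m - F m j i) * S i j m = 0 := by
  simp only [sub_mul, Finset.sum_sub_distrib]
  rw [sub_eq_zero, sum_sum_sum_reverse]
  simp only [hS]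

theorem sum_sub_swap_right_mul_symm (F S : ι → ι → ι → R) (hS : ∀ i j m, S i j m = S i m j) :
    ∑ i, ∑ j, ∑ m, (F i j m - F i m j) * S i j m = 0 := by
  refine Finset.sum_eq_zero fun i _ => ?_
  simp only [sub_mul, Finset.sum_sub_distrib]
  rw [sub_eq_zero, Finset.sum_comm]
  simp only [hS i]

variable {h : ι → ι → R} {d : ι → ι → ι → R}
  (h_symm : ∀ i j, h i j = h j i) (d_symm : ∀ s i j, d s i j = d s j i)

include h_symm d_symm

theorem bracketTensor_eq_sub_swap_add_sub_swap (i j m : ι) :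
    bracketTensor h d i j m =
      ((∑ s, h m s * d s i j) - ∑ s, h i s * d s m j) +
        ((∑ s, h s j * d i m s) - ∑ s, h s m * d i j s) := by
  simp only [bracketTensor, ← Finset.sum_sub_distrib, ← Finset.sum_add_distrib]
  refine Finset.sum_congr rfl fun s _ => ?_
  rw [h_symm i s, h_symm m s, d_symm i j s]
  ring

theorem sum_bracketTensor_mul_symm (S : ι → ι → ι → R)
    (hS_left : ∀ i j m, S i j m = S m j i) (hS_right : ∀ i j m, S i j m = S i m j) :
    ∑ i, ∑ j, ∑ m, bracketTensor h d i j m * S i j m = 0 := by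
  have h_left := sum_sub_swap_left_mul_symm (fun i j m => ∑ s, h m s * d s i j) S hS_left
  have h_right := sum_sub_swap_right_mul_symm (fun i j m => ∑ s, h s j * d i m s) S hS_right
  simp only [bracketTensor_eq_sub_swap_add_sub_swap h_symm d_symm, add_mul,
    Finset.sum_add_distrib, h_left, h_right, add_zero]

theorem sum_bracketTensor_left_diag (h_div : ∀ j, ∑ i, d i i j = 0) (j : ι) :
    ∑ i, bracketTensor h d i j i = -∑ s, ∑ i, h s i * d i s j := by
  have h_zero : ∑ i, ∑ s, h s j * d i i s = 0 := by
    rw [Finset.sum_comm]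
    simp only [← Finset.mul_sum, h_div, mul_zero, Finset.sum_const_zero]
  simp only [bracketTensor_eq_sub_swap_add_sub_swap h_symm d_symm, sub_self, zero_add,
    Finset.sum_sub_distrib, h_zero, zero_sub]
  rw [Finset.sum_comm]
  simp only [d_symm _ j]

theorem sum_bracketTensor_right_diag (h_trace : ∀ s, ∑ j, d s j j = 0) (i : ι) :
    ∑ j, bracketTensor h d i j j = ∑ s, ∑ j, h s j * d j s i := by
  have h_zero : ∑ j, ∑ s, h i s * d s j j = 0 := by
    rw [Finset.sum_comm]
    simp only [← Finset.mul_sum, h_trace, mul_zero, Finset.sum_const_zero]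
  simp only [bracketTensor_eq_sub_swap_add_sub_swap h_symm d_symm, sub_self, add_zero,
    Finset.sum_sub_distrib, h_zero, sub_zero]
  simp only [d_symm _ i]

theorem sum_bracketTensor_mul_eq_zero [DecidableEq ι] (h_div : ∀ j, ∑ i, d i i j = 0)
    (h_trace : ∀ s, ∑ j, d s j j = 0) (z : ι → R) (b c : R) :
    ∑ i, ∑ j, ∑ m, bracketTensor h d i j m *
      (c * (z m * z i * z j) +
        b * ((if i = m then 1 else 0) * z j + z i * (if j = m then 1 else 0))) = 0 := by
  have h_cubic : ∑ i, ∑ j, ∑ m, bracketTensor h d i j m * (c * (z m * z i * z j)) = 0 :=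
    sum_bracketTensor_mul_symm h_symm d_symm _ (fun _ _ _ => by ring) (fun _ _ _ => by ring)
  have h_left : ∑ i, ∑ j, bracketTensor h d i j i * (b * z j) =
      -∑ j, (∑ s, ∑ i, h s i * d i s j) * (b * z j) := by
    rw [Finset.sum_comm]
    simp only [← Finset.sum_mul, sum_bracketTensor_left_diag h_symm d_symm h_div, neg_mul,
      Finset.sum_neg_distrib]
  have h_right : ∑ i, ∑ j, bracketTensor h d i j j * (b * z i) =
      ∑ i, (∑ s, ∑ j, h s j * d j s i) * (b * z i) := by
    simp only [← Finset.sum_mul, sum_bracketTensor_right_diag h_symm d_symm h_trace]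
  simp only [mul_add, Finset.sum_add_distrib, h_cubic, ite_mul, mul_ite, one_mul, mul_one,
    zero_mul, mul_zero, Finset.sum_ite_eq, Finset.mem_univ, if_true, h_left, h_right]
  ring

end BracketTensor

section PartialDerivative

variable {N : ℕ} {y ξ : EuclideanSpace ℝ (Fin N)} {g : ℝ → ℝ}

theorem pd_const (i : Fin N) (c : ℝ) : pd N i (fun _ => c) y = 0 := by
  simp [pd]

theorem pd_sum {κ : Type*} {F : κ → EuclideanSpace ℝ (Fin N) → ℝ} (i : Fin N) (t : Finset κ)
    (hF : ∀ k ∈ t, DifferentiableAt ℝ (F k) y) :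
    pd N i (fun z => ∑ k ∈ t, F k z) y = ∑ k ∈ t, pd N i (F k) y := by
  simp [pd, fderiv_fun_sum hF]

theorem pd_mul {f₁ f₂ : EuclideanSpace ℝ (Fin N) → ℝ} (i : Fin N)
    (hf₁ : DifferentiableAt ℝ f₁ y) (hf₂ : DifferentiableAt ℝ f₂ y) :
    pd N i (fun z => f₁ z * f₂ z) y = f₁ y * pd N i f₂ y + f₂ y * pd N i f₁ y := by
  simp [pd, fderiv_fun_mul hf₁ hf₂]

theorem pd_coord_sub (m i : Fin N) :
    pd N m (fun z => (z - ξ) i) y = if i = m then 1 else 0 := by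
  have h : HasFDerivAt (fun z : EuclideanSpace ℝ (Fin N) => (z - ξ) i)
      (EuclideanSpace.proj i : EuclideanSpace ℝ (Fin N) →L[ℝ] ℝ) y :=
    (EuclideanSpace.proj i : EuclideanSpace ℝ (Fin N) →L[ℝ] ℝ).hasFDerivAt.sub_const (ξ i)
  rw [pd, h.fderiv]
  simp

theorem pd_coord (m i : Fin N) :
    pd N m (fun z => z i) y = if i = m then 1 else 0 := by
  simpa using pd_coord_sub (y := y) (ξ := 0) m i

theorem hasFDerivAt_radial (hg : DifferentiableAt ℝ g (‖y - ξ‖ ^ 2)) :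
    HasFDerivAt (fun z => g (‖z - ξ‖ ^ 2))
      (deriv g (‖y - ξ‖ ^ 2) • (2 • innerSL ℝ (y - ξ))) y :=
  hg.hasDerivAt.comp_hasFDerivAt y ((hasFDerivAt_id y).sub_const ξ).norm_sq

theorem pd_radial (i : Fin N) (hg : DifferentiableAt ℝ g (‖y - ξ‖ ^ 2)) :
    pd N i (fun z => g (‖z - ξ‖ ^ 2)) y = 2 * deriv g (‖y - ξ‖ ^ 2) * (y - ξ) i := by
  have h_inner : innerSL ℝ (y - ξ) (EuclideanSpace.single i 1) = (y - ξ) i := by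
    simp [EuclideanSpace.inner_single_right]
  rw [pd, (hasFDerivAt_radial hg).fderiv, smul_apply, smul_apply, h_inner, smul_eq_mul,
    nsmul_eq_mul, Nat.cast_ofNat]
  ring

theorem pd_radial_eventuallyEq (i : Fin N) (hg : ContDiffAt ℝ 2 g (‖y - ξ‖ ^ 2)) :
    pd N i (fun z => g (‖z - ξ‖ ^ 2)) =ᶠ[𝓝 y]
      fun z => 2 * deriv g (‖z - ξ‖ ^ 2) * (z - ξ) i := by
  have h_cont : ContinuousAt (fun z => ‖z - ξ‖ ^ 2) y := by fun_prop
  filter_upwards [h_cont.eventually (hg.eventually (by simp))] with z hz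
  exact pd_radial i (hz.differentiableAt (by simp))

theorem differentiableAt_deriv_of_contDiffAt_two {t : ℝ} (hg : ContDiffAt ℝ 2 g t) :
    DifferentiableAt ℝ (deriv g) t :=
  (hg.derivWithin (m := 1) (by norm_num)).differentiableAt (by simp)

theorem differentiableAt_two_mul_deriv_radial (hg : ContDiffAt ℝ 2 g (‖y - ξ‖ ^ 2)) :
    DifferentiableAt ℝ (fun z => 2 * deriv g (‖z - ξ‖ ^ 2)) y :=
  (hasFDerivAt_radial (differentiableAt_deriv_of_contDiffAt_two hg)).differentiableAt.const_mul 2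

theorem differentiableAt_pd_radial (i : Fin N) (hg : ContDiffAt ℝ 2 g (‖y - ξ‖ ^ 2)) :
    DifferentiableAt ℝ (pd N i fun z => g (‖z - ξ‖ ^ 2)) y :=
  ((differentiableAt_two_mul_deriv_radial hg).mul (by fun_prop)).congr_of_eventuallyEq
    (pd_radial_eventuallyEq i hg)

theorem pd_pd_radial (m i : Fin N) (hg : ContDiffAt ℝ 2 g (‖y - ξ‖ ^ 2)) :
    pd N m (pd N i fun z => g (‖z - ξ‖ ^ 2)) y =
      4 * deriv (deriv g) (‖y - ξ‖ ^ 2) * ((y - ξ) m * (y - ξ) i) +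
        2 * deriv g (‖y - ξ‖ ^ 2) * (if i = m then 1 else 0) := by
  have h_pd : pd N m (pd N i fun z => g (‖z - ξ‖ ^ 2)) y =
      pd N m (fun z => 2 * deriv g (‖z - ξ‖ ^ 2) * (z - ξ) i) y := by
    simp only [pd, (pd_radial_eventuallyEq i hg).fderiv_eq]
  have hg' := differentiableAt_deriv_of_contDiffAt_two hg
  rw [h_pd, pd_mul m (differentiableAt_two_mul_deriv_radial hg) (by fun_prop), pd_coord_sub,
    pd_radial (g := fun t => 2 * deriv g t) m (hg'.const_mul 2), deriv_const_mul _ hg']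
  ring

theorem pd_pd_radial_mul_pd_radial (m i j : Fin N) (hg : ContDiffAt ℝ 2 g (‖y - ξ‖ ^ 2)) :
    pd N m (fun z => pd N i (fun x => g (‖x - ξ‖ ^ 2)) z * pd N j (fun x => g (‖x - ξ‖ ^ 2)) z) y =
      16 * deriv g (‖y - ξ‖ ^ 2) * deriv (deriv g) (‖y - ξ‖ ^ 2) *
          ((y - ξ) m * (y - ξ) i * (y - ξ) j) +
        4 * deriv g (‖y - ξ‖ ^ 2) ^ 2 *
          ((if i = m then 1 else 0) * (y - ξ) j + (y - ξ) i * (if j = m then 1 else 0)) := by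
  have hg' : DifferentiableAt ℝ g (‖y - ξ‖ ^ 2) := hg.differentiableAt (by simp)
  rw [pd_mul m (differentiableAt_pd_radial i hg) (differentiableAt_pd_radial j hg),
    pd_pd_radial m i hg, pd_pd_radial m j hg, pd_radial i hg', pd_radial j hg']
  ring

end PartialDerivative

section WeylQuadratic

variable {N : ℕ} {W : Fin N → Fin N → Fin N → Fin N → ℝ}

theorem Hmat_symm (h_pair : ∀ i p j q, W i p j q = W j q i p) (i j : Fin N) :
    Hmat N W i j = Hmat N W j i := by
  funext y
  unfold Hmat
  rw [Finset.sum_comm]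
  refine Finset.sum_congr rfl fun p _ => Finset.sum_congr rfl fun q _ => ?_
  rw [h_pair i q j p]
  ring

theorem sum_Hmat_diag (h_trace : ∀ p q, ∑ i, W i p i q = 0) (y : EuclideanSpace ℝ (Fin N)) :
    ∑ i, Hmat N W i i y = 0 := by
  calc ∑ i, Hmat N W i i y = ∑ p, ∑ q, (∑ i, W i p i q) * y p * y q := by
        simp only [Hmat, Finset.sum_mul]
        rw [Finset.sum_comm]
        exact Finset.sum_congr rfl fun p _ => Finset.sum_comm
    _ = 0 := by simp only [h_trace, zero_mul, Finset.sum_const_zero]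

theorem sum_coord_mul_Hmat (h_anti : ∀ i p j q, W i p j q = -W p i j q) (j : Fin N)
    (y : EuclideanSpace ℝ (Fin N)) :
    ∑ i, y i * Hmat N W i j y = 0 := by
  rw [← self_eq_neg]
  simp only [Hmat, Finset.mul_sum, ← Finset.sum_neg_distrib]
  rw [Finset.sum_comm]
  refine Finset.sum_congr rfl fun p _ => Finset.sum_congr rfl fun i _ =>
    Finset.sum_congr rfl fun q _ => ?_
  rw [h_anti i p j q]
  ring

theorem differentiable_Hmat (W : Fin N → Fin N → Fin N → Fin N → ℝ) (i j : Fin N) :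
    Differentiable ℝ (Hmat N W i j) := by
  unfold Hmat
  fun_prop

theorem pd_Hmat (W : Fin N → Fin N → Fin N → Fin N → ℝ) (s i j : Fin N)
    (y : EuclideanSpace ℝ (Fin N)) :
    pd N s (Hmat N W i j) y = ∑ p, (W i s j p + W i p j s) * y p := by
  have h_term (p q : Fin N) : pd N s (fun z => W i p j q * z p * z q) y =
      W i p j q * y p * (if q = s then 1 else 0) + W i p j q * y q * (if p = s then 1 else 0) := by
    rw [pd_mul s (by fun_prop) (by fun_prop), pd_mul s (by fun_prop) (by fun_prop), pd_coord,
      pd_coord, pd_const]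
    ring
  calc pd N s (Hmat N W i j) y
      = ∑ p, ∑ q, pd N s (fun z => W i p j q * z p * z q) y := by
        unfold Hmat
        rw [pd_sum _ _ fun p _ => by fun_prop]
        exact Finset.sum_congr rfl fun p _ => pd_sum _ _ fun q _ => by fun_prop
    _ = ∑ p, W i p j s * y p + ∑ q, W i s j q * y q := by
        simp [h_term, Finset.sum_add_distrib]
    _ = ∑ p, (W i s j p + W i p j s) * y p := by
        simp only [add_mul, Finset.sum_add_distrib, add_comm]

theorem sum_pd_Hmat_diag (h_trace : ∀ p q, ∑ i, W i p i q = 0) (s : Fin N)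
    (y : EuclideanSpace ℝ (Fin N)) :
    ∑ j, pd N s (Hmat N W j j) y = 0 := by
  simp only [pd_Hmat]
  rw [Finset.sum_comm]
  simp only [← Finset.sum_mul, Finset.sum_add_distrib, h_trace, add_zero, zero_mul,
    Finset.sum_const_zero]

theorem sum_pd_Hmat (h_anti : ∀ i p j q, W i p j q = -W p i j q)
    (h_pair : ∀ i p j q, W i p j q = W j q i p) (h_trace : ∀ p q, ∑ i, W i p i q = 0) (j : Fin N)
    (y : EuclideanSpace ℝ (Fin N)) :
    ∑ i, pd N i (Hmat N W i j) y = 0 := by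
  have h_coeff (i p : Fin N) : W i i j p + W i p j i = -W i p i j := by
    linarith [h_anti i i j p, h_pair i p j i, h_anti j i i p, h_pair i j i p]
  simp only [pd_Hmat, h_coeff]
  rw [Finset.sum_comm]
  simp only [← Finset.sum_mul, Finset.sum_neg_distrib, h_trace, neg_zero, zero_mul,
    Finset.sum_const_zero]

variable {f : ℝ → ℝ} {y : EuclideanSpace ℝ (Fin N)}

theorem Hbar_symm (h_pair : ∀ i p j q, W i p j q = W j q i p) (f : ℝ → ℝ) (i j : Fin N) :
    Hbar N W f i j = Hbar N W f j i := by
  funext y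
  simp only [Hbar, Hmat_symm h_pair i j]

theorem pd_Hbar (hf : DifferentiableAt ℝ f (‖y‖ ^ 2)) (s i j : Fin N) :
    pd N s (Hbar N W f i j) y =
      f (‖y‖ ^ 2) * pd N s (Hmat N W i j) y + 2 * deriv f (‖y‖ ^ 2) * (y s * Hmat N W i j y) := by
  have h_radial : DifferentiableAt ℝ (fun z => f (‖z‖ ^ 2)) y := by
    simpa using (hasFDerivAt_radial (y := y) (ξ := 0) (by simpa using hf)).differentiableAt
  have h_pd : pd N s (fun z => f (‖z‖ ^ 2)) y = 2 * deriv f (‖y‖ ^ 2) * y s := by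
    simpa using pd_radial (y := y) (ξ := 0) s (by simpa using hf)
  unfold Hbar
  rw [pd_mul s h_radial (differentiable_Hmat W i j y), h_pd]
  ring

theorem sum_pd_Hbar_diag (h_trace : ∀ p q, ∑ i, W i p i q = 0)
    (hf : DifferentiableAt ℝ f (‖y‖ ^ 2)) (s : Fin N) :
    ∑ j, pd N s (Hbar N W f j j) y = 0 := by
  simp only [pd_Hbar hf, Finset.sum_add_distrib, ← Finset.mul_sum, sum_pd_Hmat_diag h_trace,
    sum_Hmat_diag h_trace, mul_zero, add_zero]

theorem sum_pd_Hbar (h_anti : ∀ i p j q, W i p j q = -W p i j q)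
    (h_pair : ∀ i p j q, W i p j q = W j q i p) (h_trace : ∀ p q, ∑ i, W i p i q = 0)
    (hf : DifferentiableAt ℝ f (‖y‖ ^ 2)) (j : Fin N) :
    ∑ i, pd N i (Hbar N W f i j) y = 0 := by
  simp only [pd_Hbar hf, Finset.sum_add_distrib, ← Finset.mul_sum,
    sum_pd_Hmat h_anti h_pair h_trace, sum_coord_mul_Hmat h_anti, mul_zero, add_zero]

end WeylQuadratic

theorem contDiffAt_div_sq_add_rpow {l t : ℝ} (hl : l ≠ 0) (ht : 0 ≤ t) (e : ℝ) (n : WithTop ℕ∞) :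
    ContDiffAt ℝ n (fun x => (l / (l ^ 2 + x)) ^ e) t := by
  have h_ne : l ^ 2 + t ≠ 0 := by positivity
  refine ContDiffAt.rpow_const_of_ne ?_ (by positivity)
  fun_prop (disch := assumption)

theorem stmt_13_general {N : ℕ} {W : Fin N → Fin N → Fin N → Fin N → ℝ}
    (h_anti : ∀ i p j q, W i p j q = -W p i j q) (h_pair : ∀ i p j q, W i p j q = W j q i p)
    (h_trace : ∀ p q, ∑ i, W i p i q = 0) {f g : ℝ → ℝ} {ξ y : EuclideanSpace ℝ (Fin N)}
    (hf : DifferentiableAt ℝ f (‖y‖ ^ 2)) (hg : ContDiffAt ℝ 2 g (‖y - ξ‖ ^ 2))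
    {u : EuclideanSpace ℝ (Fin N) → ℝ} (hu : ∀ z, u z = g (‖z - ξ‖ ^ 2)) :
    ∑ i, ∑ j, ∑ m, ∑ s,
      (Hbar N W f m s y * pd N s (Hbar N W f i j) y
        - Hbar N W f s i y * pd N s (Hbar N W f m j) y
        + Hbar N W f s j y * pd N i (Hbar N W f m s) y
        - Hbar N W f m s y * pd N i (Hbar N W f s j) y)
      * pd N m (fun z => pd N i u z * pd N j u z) y = 0 := by
  obtain rfl : u = fun z => g (‖z - ξ‖ ^ 2) := funext hu
  simp only [pd_pd_radial_mul_pd_radial _ _ _ hg, ← Finset.sum_mul]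
  exact sum_bracketTensor_mul_eq_zero (fun i j => congrFun (Hbar_symm h_pair f i j) y)
    (fun s i j => by rw [Hbar_symm h_pair f i j]) (sum_pd_Hbar h_anti h_pair h_trace hf)
    (sum_pd_Hbar_diag h_trace hf) (fun i => (y - ξ) i) _ _

theorem stmt_13 (N : ℕ) (hN : 5 ≤ N)
    (W : Fin N → Fin N → Fin N → Fin N → ℝ)
    (hW1 : ∀ i p j q, W i p j q = - W p i j q)
    (hW2 : ∀ i p j q, W i p j q = - W i p q j)
    (hW3 : ∀ i p j q, W i p j q = W j q i p)
    (hBianchi : ∀ i p j q, W i p j q + W i j q p + W i q p j = 0)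
    (hTrace : ∀ p q, ∑ i : Fin N, W i p i q = 0)
    (f : ℝ → ℝ)
    (hf : ∃ P : Polynomial ℝ, P.degree ≤ 4 ∧ ∀ x, f x = P.eval x)
    (ξ' : EuclideanSpace ℝ (Fin N)) (lam' : ℝ) (hlam' : 0 < lam')
    (u : EuclideanSpace ℝ (Fin N) → ℝ)
    (hu : ∀ y, u y = (lam' / (lam' ^ 2 + ‖y - ξ'‖ ^ 2)) ^ (((N : ℝ) - 4) / 2)) :
    ∀ y : EuclideanSpace ℝ (Fin N),
      ∑ i : Fin N, ∑ j : Fin N, ∑ m : Fin N, ∑ s : Fin N,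
        (Hbar N W f m s y * pd N s (Hbar N W f i j) y
          - Hbar N W f s i y * pd N s (Hbar N W f m j) y
          + Hbar N W f s j y * pd N i (Hbar N W f m s) y
          - Hbar N W f m s y * pd N i (Hbar N W f s j) y)
        * pd N m (fun z => pd N i u z * pd N j u z) y = 0 := by
  intro y
  obtain ⟨P, -, hP⟩ := hf
  obtain rfl : f = fun x => P.eval x := funext hP
  exact stmt_13_general hW1 hW3 hTrace P.differentiable.differentiableAt
    (contDiffAt_div_sq_add_rpow hlam'.ne' (sq_nonneg _) _ 2) hu
end
end

section
/- Fix λ' > 0 and let u(y) = (λ'/(λ'² + |y|²))^{(N−4)/2} (the bubble centered at ξ' = 0). Then ∫_{ℝ^N} Σ_{i,ℓ,k,m=1}^N ((∂_ℓ H̄_{mk})(y))² ((∂_i u)(y))² dy = |S^{N−1}| · (Σ_{i,j,k,ℓ=1}^N (W_{ikjℓ}+W_{iℓjk})²) · λ'^{N−4} · { [2(N−4)²/(N(N+2))] ∫₀^∞ [ r² f'(r²)² + 2 f(r²) f'(r²) ] r^{N+5}/(λ'²+r²)^{N−2} dr + [(N−4)²/N] ∫₀^∞ f(r²)² r^{N+3}/(λ'²+r²)^{N−2}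 dr }. -/
open scoped BigOperators
open MeasureTheory

noncomputable section

/-- The surface measure on the unit sphere `S^{N-1} ⊂ ℝ^N`. -/
def sphereMeasure (N : ℕ) :
    Measure (Metric.sphere (0 : EuclideanSpace ℝ (Fin N)) 1) :=
  (volume : Measure (EuclideanSpace ℝ (Fin N))).toSphere

/-- `|S^{N-1}|`, the total surface measure of the unit sphere in `ℝ^N`. -/
def sphereArea (N : ℕ) : ℝ := (sphereMeasure N Set.univ).toReal

/-!
Each `H_{ij}` is a quadratic form `½⟪Ty, y⟫`, where `T` is its Hessian: a symmetric operator that is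
traceless because `W` is, and for which `tr T² = ∑ₖₗ (W_{ikjl} + W_{iljk})²`. Differentiating,
`|∇(f(|y|²) ½⟪Ty, y⟫)|² = (|y|² f'² + 2ff')⟪Ty, y⟫² + f²|Ty|²`, whereas `|∇u|²` is radial. So only
two radially weighted integrals matter, and rotation invariance evaluates them in terms of `tr T²`:
in dimension `n`, the spherical mean of `|Ty|²` is `|y|² tr T² / n`, and that of `⟪Ty, y⟫²` is
`|y|⁴ ((tr T)² + 2 tr T²) / (n(n + 2))`. Polar coordinates turn what is left into the two
one-dimensional integrals.
-/

open scoped Gradient InnerProductSpace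
open Module (finrank)

section Integrability

lemma integrable_mul_of_abs_le_mul_norm_pow {E : Type*} [NormedAddCommGroup E] [MeasurableSpace E]
    [OpensMeasurableSpace E] {μ : Measure E} {φ g : E → ℝ} {n : ℕ} {C : ℝ}
    (hφ : Integrable (fun y => φ y * ‖y‖ ^ n) μ) (hg : AEStronglyMeasurable g μ)
    (hgC : ∀ y, |g y| ≤ C * ‖y‖ ^ n) : Integrable (fun y => φ y * g y) μ := by
  have hfactor : (fun y => φ y * g y) = fun y => φ y * ‖y‖ ^ n * (g y / ‖y‖ ^ n) := by
    funext y
    rcases eq_or_ne (‖y‖ ^ n) 0 with h0 | h0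
    · have : g y = 0 := abs_nonpos_iff.1 <| by simpa [h0] using hgC y
      simp [this]
    · field_simp
  rw [hfactor]
  have hnorm : AEStronglyMeasurable (fun y : E => ‖y‖ ^ n) μ := by fun_prop
  refine hφ.mul_bdd (c := |C|) (hg.div₀ hnorm) (.of_forall fun y => ?_)
  rw [Real.norm_eq_abs, abs_div, abs_of_nonneg (by positivity : 0 ≤ ‖y‖ ^ n)]
  refine div_le_of_le_mul₀ (by positivity) (by positivity) ((hgC y).trans ?_)
  gcongr
  exact le_abs_self C

variable {E : Type*} [NormedAddCommGroup E] [InnerProductSpace ℝ E] [SecondCountableTopology E]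
  [MeasurableSpace E] [OpensMeasurableSpace E] {μ : Measure E} {φ : E → ℝ}

lemma integrable_mul_norm_apply_sq (hφ : Integrable (fun y => φ y * ‖y‖ ^ 2) μ) (T : E →L[ℝ] E) :
    Integrable (fun y => φ y * ‖T y‖ ^ 2) μ := by
  refine integrable_mul_of_abs_le_mul_norm_pow hφ (by fun_prop) (C := ‖T‖ ^ 2) fun y => ?_
  rw [abs_of_nonneg (by positivity), ← mul_pow]
  gcongr
  exact T.le_opNorm y

lemma integrable_mul_inner_apply_self_sq (hφ : Integrable (fun y => φ y * ‖y‖ ^ 4) μ)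
    (T : E →L[ℝ] E) : Integrable (fun y => φ y * ⟪T y, y⟫_ℝ ^ 2) μ := by
  refine integrable_mul_of_abs_le_mul_norm_pow hφ (by fun_prop) (C := ‖T‖ ^ 2) fun y => ?_
  calc |⟪T y, y⟫_ℝ ^ 2| = |⟪T y, y⟫_ℝ| ^ 2 := abs_pow _ _
    _ ≤ (‖T‖ * ‖y‖ * ‖y‖) ^ 2 := by
      gcongr
      exact (abs_real_inner_le_norm _ _).trans (by gcongr; exact T.le_opNorm y)
    _ = ‖T‖ ^ 2 * ‖y‖ ^ 4 := by ring

lemma integrable_mul_inner_sq (hφ : Integrable (fun y => φ y * ‖y‖ ^ 2) μ) (v : E) :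
    Integrable (fun y => φ y * ⟪v, y⟫_ℝ ^ 2) μ := by
  refine integrable_mul_of_abs_le_mul_norm_pow hφ (by fun_prop) (C := ‖v‖ ^ 2) fun y => ?_
  rw [abs_pow, ← mul_pow]
  gcongr
  exact abs_real_inner_le_norm v y

lemma integrable_mul_inner_sq_mul_inner_sq (hφ : Integrable (fun y => φ y * ‖y‖ ^ 4) μ) (v w : E) :
    Integrable (fun y => φ y * (⟪v, y⟫_ℝ ^ 2 * ⟪w, y⟫_ℝ ^ 2)) μ := by
  refine integrable_mul_of_abs_le_mul_norm_pow hφ (by fun_prop) (C := ‖v‖ ^ 2 * ‖w‖ ^ 2)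
    fun y => ?_
  calc |⟪v, y⟫_ℝ ^ 2 * ⟪w, y⟫_ℝ ^ 2| = |⟪v, y⟫_ℝ| ^ 2 * |⟪w, y⟫_ℝ| ^ 2 := by
        rw [abs_mul, abs_pow, abs_pow]
    _ ≤ (‖v‖ * ‖y‖) ^ 2 * (‖w‖ * ‖y‖) ^ 2 := by
        gcongr <;> exact abs_real_inner_le_norm _ y
    _ = ‖v‖ ^ 2 * ‖w‖ ^ 2 * ‖y‖ ^ 4 := by ring

end Integrability

section SymmetricOperators

variable {E ι : Type*} [NormedAddCommGroup E] [InnerProductSpace ℝ E] [Fintype ι] {T : E →L[ℝ] E}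

lemma trace_comp_self_eq_sum_norm_sq (hT : (T : E →ₗ[ℝ] E).IsSymmetric)
    (b : OrthonormalBasis ι ℝ E) :
    LinearMap.trace ℝ E (T ∘L T) = ∑ i, ‖T (b i)‖ ^ 2 := by
  rw [LinearMap.trace_eq_sum_inner _ b]
  refine Finset.sum_congr rfl fun i _ => ?_
  rw [← real_inner_self_eq_norm_sq]
  exact (hT _ _).symm

end SymmetricOperators

section RadialMoments

variable {E : Type*} [NormedAddCommGroup E] [InnerProductSpace ℝ E] [FiniteDimensional ℝ E]
  [MeasurableSpace E] [BorelSpace E] {φ : ℝ → ℝ}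

lemma integral_radial_mul_inner_pow_congr (φ : ℝ → ℝ) (n : ℕ) {v w : E} (h : ‖v‖ = ‖w‖) :
    ∫ y : E, φ ‖y‖ * ⟪v, y⟫_ℝ ^ n = ∫ y : E, φ ‖y‖ * ⟪w, y⟫_ℝ ^ n := by
  let R := (ℝ ∙ (v - w))ᗮ.reflection
  have hR : R v = w := Submodule.reflection_sub h
  rw [← R.measurePreserving.integral_comp' (f := R.toMeasurableEquiv)
    (fun y => φ ‖y‖ * ⟪w, y⟫_ℝ ^ n)]
  simp only [LinearIsometryEquiv.coe_toMeasurableEquiv, LinearIsometryEquiv.norm_map, ← hR,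
    LinearIsometryEquiv.inner_map_map]

lemma integral_radial_mul_inner_pow (φ : ℝ → ℝ) (n : ℕ) {e : E} (he : ‖e‖ = 1) (v : E) :
    ∫ y : E, φ ‖y‖ * ⟪v, y⟫_ℝ ^ n = (∫ y : E, φ ‖y‖ * ⟪e, y⟫_ℝ ^ n) * ‖v‖ ^ n := by
  have hnorm : ‖v‖ = ‖‖v‖ • e‖ := by simp [norm_smul, he]
  rw [integral_radial_mul_inner_pow_congr φ n hnorm, ← integral_mul_const]
  simp only [real_inner_smul_left, mul_pow]
  congr with y
  ring

lemma integral_radial_mul_inner_sq [Nontrivial E]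
    (hφ : Integrable fun y : E => φ ‖y‖ * ‖y‖ ^ 2) (v : E) :
    ∫ y : E, φ ‖y‖ * ⟪v, y⟫_ℝ ^ 2 = (∫ y : E, φ ‖y‖ * ‖y‖ ^ 2) / finrank ℝ E * ‖v‖ ^ 2 := by
  obtain ⟨e, he⟩ := exists_norm_eq E zero_le_one
  let b := stdOrthonormalBasis ℝ E
  have htotal : ∫ y : E, φ ‖y‖ * ‖y‖ ^ 2
      = finrank ℝ E * ∫ y : E, φ ‖y‖ * ⟪e, y⟫_ℝ ^ 2 := by
    simp only [← b.sum_sq_inner_right, Finset.mul_sum]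
    rw [integral_finsetSum _ fun i _ => integrable_mul_inner_sq hφ (b i)]
    simp [integral_radial_mul_inner_pow φ 2 he (b _)]
  have hdim : (finrank ℝ E : ℝ) ≠ 0 := by exact_mod_cast (Module.finrank_pos (R := ℝ)).ne'
  rw [integral_radial_mul_inner_pow φ 2 he v, htotal, mul_div_cancel_left₀ _ hdim]

lemma integral_radial_mul_norm_apply_sq [Nontrivial E] {T : E →L[ℝ] E}
    (hT : (T : E →ₗ[ℝ] E).IsSymmetric) (hφ : Integrable fun y : E => φ ‖y‖ * ‖y‖ ^ 2) :
    ∫ y : E, φ ‖y‖ * ‖T y‖ ^ 2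
      = (∫ y : E, φ ‖y‖ * ‖y‖ ^ 2) / finrank ℝ E * LinearMap.trace ℝ E (T ∘L T) := by
  let b := stdOrthonormalBasis ℝ E
  have hexpand (y : E) : φ ‖y‖ * ‖T y‖ ^ 2 = ∑ i, φ ‖y‖ * ⟪T (b i), y⟫_ℝ ^ 2 := by
    rw [← b.sum_sq_inner_right, Finset.mul_sum]
    exact Finset.sum_congr rfl fun i _ => congrArg (φ ‖y‖ * · ^ 2) (hT (b i) y).symm
  simp only [hexpand]
  rw [integral_finsetSum _ fun i _ => integrable_mul_inner_sq hφ (T (b i)),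
    trace_comp_self_eq_sum_norm_sq hT b, Finset.mul_sum]
  simp only [integral_radial_mul_inner_sq hφ]

lemma integral_radial_mul_inner_sq_mul_inner_sq
    (hφ : Integrable fun y : E => φ ‖y‖ * ‖y‖ ^ 4) {e : E} (he : ‖e‖ = 1) (v w : E) :
    ∫ y : E, φ ‖y‖ * (⟪v, y⟫_ℝ ^ 2 * ⟪w, y⟫_ℝ ^ 2)
      = (∫ y : E, φ ‖y‖ * ⟪e, y⟫_ℝ ^ 4) / 3 * (‖v‖ ^ 2 * ‖w‖ ^ 2 + 2 * ⟪v, w⟫_ℝ ^ 2) := by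
  have hint (x : E) : Integrable fun y : E => φ ‖y‖ * ⟪x, y⟫_ℝ ^ 4 := by
    simpa only [← pow_add] using integrable_mul_inner_sq_mul_inner_sq hφ x x
  -- Polarization: `12 s² t² = (s + t)⁴ + (s - t)⁴ - 2 s⁴ - 2 t⁴`.
  have hpolar (y : E) : φ ‖y‖ * (⟪v, y⟫_ℝ ^ 2 * ⟪w, y⟫_ℝ ^ 2)
      = 1 / 12 * (φ ‖y‖ * ⟪v + w, y⟫_ℝ ^ 4 + φ ‖y‖ * ⟪v - w, y⟫_ℝ ^ 4
        - 2 * (φ ‖y‖ * ⟪v, y⟫_ℝ ^ 4) - 2 * (φ ‖y‖ * ⟪w, y⟫_ℝ ^ 4)) := by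
    rw [inner_add_left, inner_sub_left]
    ring
  have hadd : ‖v + w‖ ^ 4 = (‖v‖ ^ 2 + 2 * ⟪v, w⟫_ℝ + ‖w‖ ^ 2) ^ 2 := by
    rw [← norm_add_sq_real]; ring
  have hsub : ‖v - w‖ ^ 4 = (‖v‖ ^ 2 - 2 * ⟪v, w⟫_ℝ + ‖w‖ ^ 2) ^ 2 := by
    rw [← norm_sub_sq_real]; ring
  simp only [hpolar]
  rw [integral_const_mul, integral_sub (by fun_prop) (by fun_prop),
    integral_sub (by fun_prop) (by fun_prop), integral_add (hint _) (hint _), integral_const_mul,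
    integral_const_mul]
  rw [integral_radial_mul_inner_pow φ 4 he (v + w), integral_radial_mul_inner_pow φ 4 he (v - w),
    integral_radial_mul_inner_pow φ 4 he v, integral_radial_mul_inner_pow φ 4 he w, hadd, hsub]
  ring

lemma integral_radial_mul_sum_inner_sq_sq {ι : Type*} [Fintype ι]
    (hφ : Integrable fun y : E => φ ‖y‖ * ‖y‖ ^ 4) {e : E} (he : ‖e‖ = 1)
    (b : OrthonormalBasis ι ℝ E) (μ : ι → ℝ) :
    ∫ y : E, φ ‖y‖ * (∑ i, μ i * ⟪b i, y⟫_ℝ ^ 2) ^ 2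
      = (∫ y : E, φ ‖y‖ * ⟪e, y⟫_ℝ ^ 4) / 3 * ((∑ i, μ i) ^ 2 + 2 * ∑ i, μ i ^ 2) := by
  classical
  have hexpand (y : E) : φ ‖y‖ * (∑ i, μ i * ⟪b i, y⟫_ℝ ^ 2) ^ 2
      = ∑ i, ∑ j, μ i * μ j * (φ ‖y‖ * (⟪b i, y⟫_ℝ ^ 2 * ⟪b j, y⟫_ℝ ^ 2)) := by
    rw [sq, Finset.sum_mul_sum, Finset.mul_sum]
    simp only [Finset.mul_sum]
    exact Finset.sum_congr rfl fun i _ => Finset.sum_congr rfl fun j _ => by ring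
  have hint (i j) := (integrable_mul_inner_sq_mul_inner_sq hφ (b i) (b j)).const_mul (μ i * μ j)
  have hmoment (i j) : ∫ y : E, μ i * μ j * (φ ‖y‖ * (⟪b i, y⟫_ℝ ^ 2 * ⟪b j, y⟫_ℝ ^ 2))
      = (∫ y : E, φ ‖y‖ * ⟪e, y⟫_ℝ ^ 4) / 3 * (μ i * μ j + if i = j then 2 * μ i * μ j else 0) := by
    rw [integral_const_mul, integral_radial_mul_inner_sq_mul_inner_sq hφ he, b.inner_eq_ite]
    split_ifs <;> simp <;> ring
  simp only [hexpand]
  rw [integral_finsetSum _ fun i _ => integrable_finsetSum _ fun j _ => hint i j]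
  simp only [integral_finsetSum _ fun j _ => hint _ j, hmoment, ← Finset.mul_sum,
    Finset.sum_add_distrib, Finset.sum_ite_eq, Finset.mem_univ, if_true]
  rw [sq, Finset.sum_mul_sum]
  simp only [Finset.mul_sum, sq, mul_assoc]

lemma integral_radial_mul_norm_pow_four
    (hφ : Integrable fun y : E => φ ‖y‖ * ‖y‖ ^ 4) {e : E} (he : ‖e‖ = 1) :
    ∫ y : E, φ ‖y‖ * ‖y‖ ^ 4
      = (∫ y : E, φ ‖y‖ * ⟪e, y⟫_ℝ ^ 4) / 3 * (finrank ℝ E * (finrank ℝ E + 2)) := by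
  have h := integral_radial_mul_sum_inner_sq_sq hφ he (stdOrthonormalBasis ℝ E) 1
  simp only [Pi.one_apply, one_mul, OrthonormalBasis.sum_sq_inner_right, ← pow_mul] at h
  rw [h]
  simp only [one_pow, Finset.sum_const, Finset.card_univ, Fintype.card_fin, nsmul_eq_mul, mul_one]
  ring

lemma integral_radial_mul_inner_apply_self_sq [Nontrivial E] {T : E →L[ℝ] E}
    (hT : (T : E →ₗ[ℝ] E).IsSymmetric) (hφ : Integrable fun y : E => φ ‖y‖ * ‖y‖ ^ 4) :
    ∫ y : E, φ ‖y‖ * ⟪T y, y⟫_ℝ ^ 2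
      = (∫ y : E, φ ‖y‖ * ‖y‖ ^ 4) / (finrank ℝ E * (finrank ℝ E + 2))
        * (LinearMap.trace ℝ E T ^ 2 + 2 * LinearMap.trace ℝ E (T ∘L T)) := by
  obtain ⟨e, he⟩ := exists_norm_eq E zero_le_one
  let b := hT.eigenvectorBasis rfl
  let μ := hT.eigenvalues rfl
  have hTb (i) : T (b i) = μ i • b i := hT.apply_eigenvectorBasis rfl i
  have htrace : LinearMap.trace ℝ E T = ∑ i, μ i := hT.trace_eq_sum_eigenvalues rfl
  have htrace_sq : LinearMap.trace ℝ E (T ∘L T) = ∑ i, μ i ^ 2 := by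
    rw [trace_comp_self_eq_sum_norm_sq hT b]
    simp [hTb, norm_smul]
  have hdiag (y : E) : ⟪T y, y⟫_ℝ = ∑ i, μ i * ⟪b i, y⟫_ℝ ^ 2 := by
    rw [← b.sum_inner_mul_inner (T y) y]
    refine Finset.sum_congr rfl fun i _ => ?_
    rw [show ⟪T y, b i⟫_ℝ = ⟪y, T (b i)⟫_ℝ from hT y (b i), hTb, real_inner_smul_right,
      real_inner_comm]
    ring
  have hdim : (0 : ℝ) < finrank ℝ E := by exact_mod_cast Module.finrank_pos (R := ℝ)
  simp only [hdiag]
  rw [integral_radial_mul_sum_inner_sq_sq hφ he, ← htrace, ← htrace_sq,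
    integral_radial_mul_norm_pow_four hφ he, mul_div_cancel_right₀ _ (by positivity)]

end RadialMoments

section Gradients

variable {E : Type*} [NormedAddCommGroup E] [InnerProductSpace ℝ E] [CompleteSpace E]

lemma hasGradientAt_comp_norm_sq {f : ℝ → ℝ} {y : E} (hf : DifferentiableAt ℝ f (‖y‖ ^ 2)) :
    HasGradientAt (fun x : E => f (‖x‖ ^ 2)) ((2 * deriv f (‖y‖ ^ 2)) • y) y := by
  rw [hasGradientAt_iff_hasFDerivAt]
  have hnorm := (hasStrictFDerivAt_norm_sq y).hasFDerivAt
  refine (hf.hasDerivAt.comp_hasFDerivAt y hnorm).congr_fderiv ?_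
  ext v
  simp only [smul_apply, coe_innerSL_apply, nsmul_eq_mul, Nat.cast_ofNat, smul_eq_mul, map_smul,
    InnerProductSpace.toDual_apply_apply]
  ring

lemma hasGradientAt_half_inner_apply_self {T : E →L[ℝ] E} (hT : (T : E →ₗ[ℝ] E).IsSymmetric)
    (y : E) : HasGradientAt (fun x => 1 / 2 * ⟪T x, x⟫_ℝ) (T y) y := by
  rw [hasGradientAt_iff_hasFDerivAt]
  refine ((hT.hasStrictFDerivAt_reApplyInnerSelf y).hasFDerivAt.const_mul (1 / 2)).congr_fderiv ?_
  ext v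
  simp

/-- The coefficient of `⟪T y, y⟫ ^ 2` in the squared norm of the gradient of
`f (‖y‖ ^ 2) * (1 / 2 * ⟪T y, y⟫)`, as a function of `r = ‖y‖`. -/
def quadraticCoeff (f : ℝ → ℝ) (r : ℝ) : ℝ :=
  r ^ 2 * deriv f (r ^ 2) ^ 2 + 2 * f (r ^ 2) * deriv f (r ^ 2)

lemma norm_sq_gradient_radial_mul_quadratic {T : E →L[ℝ] E}
    (hT : (T : E →ₗ[ℝ] E).IsSymmetric) {f : ℝ → ℝ} {y : E}
    (hf : DifferentiableAt ℝ f (‖y‖ ^ 2)) :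
    ‖∇ (fun x => f (‖x‖ ^ 2) * (1 / 2 * ⟪T x, x⟫_ℝ)) y‖ ^ 2
      = quadraticCoeff f ‖y‖ * ⟪T y, y⟫_ℝ ^ 2 + f (‖y‖ ^ 2) ^ 2 * ‖T y‖ ^ 2 := by
  have hgrad : ∇ (fun x => f (‖x‖ ^ 2) * (1 / 2 * ⟪T x, x⟫_ℝ)) y
      = f (‖y‖ ^ 2) • T y + (deriv f (‖y‖ ^ 2) * ⟪T y, y⟫_ℝ) • y := by
    refine HasGradientAt.gradient (hasGradientAt_iff_hasFDerivAt.2 ?_)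
    refine ((hasGradientAt_comp_norm_sq hf).hasFDerivAt.mul
      (hasGradientAt_half_inner_apply_self hT y).hasFDerivAt).congr_fderiv ?_
    ext v
    simp only [add_apply, smul_apply, InnerProductSpace.toDual_apply_apply, smul_eq_mul, map_add,
      map_smul]
    ring
  rw [hgrad, norm_add_sq_real, norm_smul, norm_smul, real_inner_smul_left, real_inner_smul_right,
    mul_pow, mul_pow, Real.norm_eq_abs, Real.norm_eq_abs, sq_abs, sq_abs, quadraticCoeff]
  ring

lemma norm_sq_gradient_bubble {lam : ℝ} (hlam : 0 < lam) (a : ℝ) (y : E) :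
    ‖∇ (fun x : E => (lam / (lam ^ 2 + ‖x‖ ^ 2)) ^ a) y‖ ^ 2
      = (2 * a) ^ 2 * lam ^ (2 * a) * (‖y‖ ^ 2 / (lam ^ 2 + ‖y‖ ^ 2) ^ (2 * a + 2)) := by
  have hs : 0 < lam ^ 2 + ‖y‖ ^ 2 := by positivity
  have hprofile : HasDerivAt (fun s => (lam / (lam ^ 2 + s)) ^ a)
      (-(a * (lam / (lam ^ 2 + ‖y‖ ^ 2)) ^ a / (lam ^ 2 + ‖y‖ ^ 2))) (‖y‖ ^ 2) := by
    have hinv := (((hasDerivAt_id' (‖y‖ ^ 2)).const_add (lam ^ 2)).fun_inv hs.ne').const_mul lam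
    have hbase : lam / (lam ^ 2 + ‖y‖ ^ 2) ≠ 0 := (div_pos hlam hs).ne'
    refine (hinv.rpow_const (p := a) (.inl hbase)).congr_deriv ?_
    rw [← div_eq_mul_inv, Real.rpow_sub_one hbase]
    field_simp
  rw [(hasGradientAt_comp_norm_sq hprofile.differentiableAt).gradient, hprofile.deriv, norm_smul,
    mul_pow, Real.norm_eq_abs, sq_abs, Real.rpow_add hs, mul_comm 2 a, Real.rpow_mul hlam.le,
    Real.rpow_mul hs.le, Real.div_rpow hlam.le hs.le, Real.rpow_two, Real.rpow_two, Real.rpow_two]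
  field_simp

lemma norm_sq_gradient_bubble_natCast {N : ℕ} (hN : 4 ≤ N) {lam : ℝ} (hlam : 0 < lam) (y : E) :
    ‖∇ (fun x : E => (lam / (lam ^ 2 + ‖x‖ ^ 2)) ^ (((N : ℝ) - 4) / 2)) y‖ ^ 2
      = ((N : ℝ) - 4) ^ 2 * lam ^ (N - 4) * (‖y‖ ^ 2 / (lam ^ 2 + ‖y‖ ^ 2) ^ (N - 2)) := by
  have h4 : 2 * (((N : ℝ) - 4) / 2) = ((N - 4 : ℕ) : ℝ) := by
    rw [Nat.cast_sub hN]
    push_cast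
    ring
  have h2 : ((N - 4 : ℕ) : ℝ) + 2 = ((N - 2 : ℕ) : ℝ) := by
    exact_mod_cast (by omega : N - 4 + 2 = N - 2)
  rw [norm_sq_gradient_bubble hlam, h4, h2, Real.rpow_natCast, Real.rpow_natCast,
    Nat.cast_sub hN, Nat.cast_ofNat]

end Gradients

section PartialDerivatives

variable {N : ℕ}

lemma sum_pd_sq (g : EuclideanSpace ℝ (Fin N) → ℝ) (y : EuclideanSpace ℝ (Fin N)) :
    ∑ l, pd N l g y ^ 2 = ‖∇ g y‖ ^ 2 := by
  rw [← (EuclideanSpace.basisFun (Fin N) ℝ).sum_sq_inner_left]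
  simp [pd, inner_gradient_left]

lemma sum_pd_sq_mul_pd_sq {ι κ : Type*} [Fintype ι] [Fintype κ]
    (g : ι → κ → EuclideanSpace ℝ (Fin N) → ℝ) (u : EuclideanSpace ℝ (Fin N) → ℝ)
    (y : EuclideanSpace ℝ (Fin N)) :
    ∑ i, ∑ l, ∑ k, ∑ m, pd N l (g m k) y ^ 2 * pd N i u y ^ 2
      = ‖∇ u y‖ ^ 2 * ∑ m, ∑ k, ‖∇ (g m k) y‖ ^ 2 := by
  have hreorder : ∑ l, ∑ k, ∑ m, pd N l (g m k) y ^ 2 = ∑ m, ∑ k, ‖∇ (g m k) y‖ ^ 2 := by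
    simp only [← sum_pd_sq]
    exact Finset.sum_comm_cycle.trans (Finset.sum_congr rfl fun m _ => Finset.sum_comm)
  simp only [← Finset.sum_mul, ← Finset.mul_sum, hreorder, sum_pd_sq]
  exact mul_comm _ _

end PartialDerivatives

section WeightedEnergy

variable {E : Type*} [NormedAddCommGroup E] [InnerProductSpace ℝ E] [FiniteDimensional ℝ E]
  [MeasurableSpace E] [BorelSpace E] [Nontrivial E] {φ f : ℝ → ℝ} {T : E →L[ℝ] E}

lemma radial_mul_norm_sq_gradient_ae_eq (φ : ℝ → ℝ)
    (hf : DifferentiableOn ℝ f (Set.Ioi 0)) (hT : (T : E →ₗ[ℝ] E).IsSymmetric) :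
    (fun y : E => φ ‖y‖ * ‖∇ (fun x => f (‖x‖ ^ 2) * (1 / 2 * ⟪T x, x⟫_ℝ)) y‖ ^ 2)
      =ᵐ[volume] fun y =>
        φ ‖y‖ * quadraticCoeff f ‖y‖ * ⟪T y, y⟫_ℝ ^ 2
          + φ ‖y‖ * f (‖y‖ ^ 2) ^ 2 * ‖T y‖ ^ 2 := by
  filter_upwards [compl_mem_ae_iff.2 (measure_singleton (0 : E))] with y hy
  have hpos : 0 < ‖y‖ ^ 2 := pow_pos (norm_pos_iff.2 hy) 2
  rw [norm_sq_gradient_radial_mul_quadratic hT (hf.differentiableAt (Ioi_mem_nhds hpos))]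
  ring

lemma integrable_radial_mul_norm_sq_gradient
    (hf : DifferentiableOn ℝ f (Set.Ioi 0)) (hT : (T : E →ₗ[ℝ] E).IsSymmetric)
    (h4 : Integrable fun y : E => φ ‖y‖ * quadraticCoeff f ‖y‖ * ‖y‖ ^ 4)
    (h2 : Integrable fun y : E => φ ‖y‖ * f (‖y‖ ^ 2) ^ 2 * ‖y‖ ^ 2) :
    Integrable fun y : E =>
      φ ‖y‖ * ‖∇ (fun x => f (‖x‖ ^ 2) * (1 / 2 * ⟪T x, x⟫_ℝ)) y‖ ^ 2 :=
  ((integrable_mul_inner_apply_self_sq h4 T).add (integrable_mul_norm_apply_sq h2 T)).congr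
    (radial_mul_norm_sq_gradient_ae_eq φ hf hT).symm

lemma integral_radial_mul_norm_sq_gradient
    (hf : DifferentiableOn ℝ f (Set.Ioi 0)) (hT : (T : E →ₗ[ℝ] E).IsSymmetric)
    (h4 : Integrable fun y : E => φ ‖y‖ * quadraticCoeff f ‖y‖ * ‖y‖ ^ 4)
    (h2 : Integrable fun y : E => φ ‖y‖ * f (‖y‖ ^ 2) ^ 2 * ‖y‖ ^ 2) :
    ∫ y : E, φ ‖y‖ * ‖∇ (fun x => f (‖x‖ ^ 2) * (1 / 2 * ⟪T x, x⟫_ℝ)) y‖ ^ 2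
      = (∫ y : E, φ ‖y‖ * quadraticCoeff f ‖y‖ * ‖y‖ ^ 4) / (finrank ℝ E * (finrank ℝ E + 2))
          * (LinearMap.trace ℝ E T ^ 2 + 2 * LinearMap.trace ℝ E (T ∘L T))
        + (∫ y : E, φ ‖y‖ * f (‖y‖ ^ 2) ^ 2 * ‖y‖ ^ 2) / finrank ℝ E
          * LinearMap.trace ℝ E (T ∘L T) := by
  rw [integral_congr_ae (radial_mul_norm_sq_gradient_ae_eq φ hf hT),
    integral_add (integrable_mul_inner_apply_self_sq h4 T) (integrable_mul_norm_apply_sq h2 T)]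
  exact congrArg₂ (· + ·)
    (integral_radial_mul_inner_apply_self_sq (φ := fun r => φ r * quadraticCoeff f r) hT h4)
    (integral_radial_mul_norm_apply_sq (φ := fun r => φ r * f (r ^ 2) ^ 2) hT h2)

end WeightedEnergy

section Hessian

variable {N : ℕ} (W : Fin N → Fin N → Fin N → Fin N → ℝ) (i j : Fin N)

/-- The Hessian of the quadratic form `Hmat N W i j`, as an operator. -/
def hessianHmat : EuclideanSpace ℝ (Fin N) →L[ℝ] EuclideanSpace ℝ (Fin N) :=
  Matrix.toEuclideanCLM (𝕜 := ℝ) (Matrix.of fun p q => W i p j q + W i q j p)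

lemma hessianHmat_apply (y : EuclideanSpace ℝ (Fin N)) (p : Fin N) :
    hessianHmat W i j y p = ∑ q, (W i p j q + W i q j p) * y q := by
  simp [hessianHmat, Matrix.mulVec, dotProduct]

lemma isSymmetric_hessianHmat :
    (hessianHmat W i j : EuclideanSpace ℝ (Fin N) →ₗ[ℝ] _).IsSymmetric := by
  rw [hessianHmat, Matrix.coe_toEuclideanCLM_eq_toEuclideanLin,
    Matrix.isSymmetric_toEuclideanLin_iff]
  ext p q
  simp [add_comm]

lemma Hmat_eq_half_inner_hessianHmat (y : EuclideanSpace ℝ (Fin N)) :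
    Hmat N W i j y = 1 / 2 * ⟪hessianHmat W i j y, y⟫_ℝ := by
  have hswap : ∑ p, ∑ q, W i q j p * y p * y q = Hmat N W i j y := by
    rw [Hmat, Finset.sum_comm]
    simp only [mul_right_comm]
  have hinner : ⟪hessianHmat W i j y, y⟫_ℝ
      = ∑ p, ∑ q, (W i p j q * y p * y q + W i q j p * y p * y q) := by
    simp only [PiLp.inner_apply, hessianHmat_apply, RCLike.inner_apply, conj_trivial,
      Finset.mul_sum]
    exact Finset.sum_congr rfl fun p _ => Finset.sum_congr rfl fun q _ => by ring
  simp only [hinner, Finset.sum_add_distrib, hswap]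
  rw [← Hmat]
  ring

lemma trace_hessianHmat :
    LinearMap.trace ℝ (EuclideanSpace ℝ (Fin N))
        (hessianHmat W i j : EuclideanSpace ℝ (Fin N) →ₗ[ℝ] _)
      = 2 * ∑ p, W i p j p := by
  rw [LinearMap.trace_eq_sum_inner _ (EuclideanSpace.basisFun (Fin N) ℝ)]
  simp [EuclideanSpace.inner_single_left, hessianHmat_apply, Finset.mul_sum, two_mul]

lemma trace_hessianHmat_comp_self :
    LinearMap.trace ℝ (EuclideanSpace ℝ (Fin N)) (hessianHmat W i j ∘L hessianHmat W i j)
      = ∑ p, ∑ q, (W i p j q + W i q j p) ^ 2 := by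
  rw [trace_comp_self_eq_sum_norm_sq (isSymmetric_hessianHmat W i j)
    (EuclideanSpace.basisFun (Fin N) ℝ), Finset.sum_comm]
  simp [EuclideanSpace.norm_sq_eq, hessianHmat_apply]

end Hessian

section PolarCoordinates

variable {N : ℕ} [NeZero N]

lemma pow_pred_mul_mul_pow_succ (F : ℝ → ℝ) (n : ℕ) (r : ℝ) :
    r ^ (N - 1) * (F r * r ^ (n + 1)) = F r * r ^ (N + n) := by
  have hN := NeZero.pos N
  rw [mul_left_comm, ← pow_add, show N - 1 + (n + 1) = N + n by omega]

lemma integral_radial_mul_norm_pow_succ (F : ℝ → ℝ) (n : ℕ) :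
    ∫ y : EuclideanSpace ℝ (Fin N), F ‖y‖ * ‖y‖ ^ (n + 1)
      = sphereArea N * ∫ r in Set.Ioi (0 : ℝ), F r * r ^ (N + n) := by
  have hsphere : sphereArea N
      = N * volume.real (Metric.ball (0 : EuclideanSpace ℝ (Fin N)) 1) := by
    have h := (volume : Measure (EuclideanSpace ℝ (Fin N))).toSphere_real_apply_univ
    rwa [finrank_euclideanSpace_fin] at h
  rw [integral_fun_norm_addHaar volume fun r => F r * r ^ (n + 1), hsphere,
    finrank_euclideanSpace_fin]
  simp only [smul_eq_mul, nsmul_eq_mul, pow_pred_mul_mul_pow_succ, mul_assoc]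

lemma integrable_radial_mul_norm_pow_succ_iff {F : ℝ → ℝ} {n : ℕ} :
    (Integrable fun y : EuclideanSpace ℝ (Fin N) => F ‖y‖ * ‖y‖ ^ (n + 1))
      ↔ IntegrableOn (fun r => F r * r ^ (N + n)) (Set.Ioi 0) := by
  rw [integrable_fun_norm_addHaar volume (f := fun r => F r * r ^ (n + 1)),
    finrank_euclideanSpace_fin]
  simp only [smul_eq_mul, pow_pred_mul_mul_pow_succ]

end PolarCoordinates

section WeylEnergy

lemma Hbar_eq_radial_mul_quadratic {N : ℕ} (W : Fin N → Fin N → Fin N → Fin N → ℝ) (f : ℝ → ℝ)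
    (i j : Fin N) :
    Hbar N W f i j = fun y => f (‖y‖ ^ 2) * (1 / 2 * ⟪hessianHmat W i j y, y⟫_ℝ) := by
  funext y
  rw [Hbar, Hmat_eq_half_inner_hessianHmat]

variable {N : ℕ} [NeZero N] {W : Fin N → Fin N → Fin N → Fin N → ℝ} {φ f : ℝ → ℝ}

lemma integral_radial_mul_sum_norm_sq_gradient_Hbar (hW : ∀ i j, ∑ p, W i p j p = 0)
    (hf : DifferentiableOn ℝ f (Set.Ioi 0))
    (h4 : Integrable fun y : EuclideanSpace ℝ (Fin N) => φ ‖y‖ * quadraticCoeff f ‖y‖ * ‖y‖ ^ 4)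
    (h2 : Integrable fun y : EuclideanSpace ℝ (Fin N) => φ ‖y‖ * f (‖y‖ ^ 2) ^ 2 * ‖y‖ ^ 2) :
    ∫ y : EuclideanSpace ℝ (Fin N), φ ‖y‖ * ∑ i, ∑ j, ‖∇ (Hbar N W f i j) y‖ ^ 2
      = (∑ i, ∑ j, ∑ k, ∑ l, (W i k j l + W i l j k) ^ 2)
        * (2 / (N * (N + 2)) * (∫ y : EuclideanSpace ℝ (Fin N),
            φ ‖y‖ * quadraticCoeff f ‖y‖ * ‖y‖ ^ 4)
          + 1 / N * ∫ y : EuclideanSpace ℝ (Fin N), φ ‖y‖ * f (‖y‖ ^ 2) ^ 2 * ‖y‖ ^ 2) := by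
  have hint (i j) : Integrable fun y => φ ‖y‖ * ‖∇ (Hbar N W f i j) y‖ ^ 2 := by
    rw [Hbar_eq_radial_mul_quadratic]
    exact integrable_radial_mul_norm_sq_gradient hf (isSymmetric_hessianHmat W i j) h4 h2
  simp only [Finset.mul_sum]
  rw [integral_finsetSum _ fun i _ => integrable_finsetSum _ fun j _ => hint i j]
  simp only [integral_finsetSum _ fun j _ => hint _ j, Finset.sum_mul]
  refine Finset.sum_congr rfl fun i _ => Finset.sum_congr rfl fun j _ => ?_
  rw [Hbar_eq_radial_mul_quadratic, integral_radial_mul_norm_sq_gradient hf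
    (isSymmetric_hessianHmat W i j) h4 h2, trace_hessianHmat, trace_hessianHmat_comp_self, hW,
    finrank_euclideanSpace_fin]
  simp only [← Finset.sum_mul]
  ring

end WeylEnergy

section PolynomialIntegrability

open Polynomial Filter

lemma integrableOn_Ioi_eval_div_eval {A D : ℝ[X]} (hD : ∀ x, 0 ≤ x → D.eval x ≠ 0)
    (hAD : A.natDegree + 2 ≤ D.natDegree) :
    IntegrableOn (fun r => A.eval r / D.eval r) (Set.Ioi 0) := by
  have hcont : ContinuousOn (fun r => A.eval r / D.eval r) (Set.Ici 0) :=
    A.continuousOn.div D.continuousOn hD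
  have hD0 : D ≠ 0 := fun h => hD 0 le_rfl (by simp [h])
  have hdegree : (A * X ^ 2).degree ≤ D.degree := by
    rw [degree_eq_natDegree hD0]
    exact degree_le_of_natDegree_le
      (natDegree_mul_le.trans (by rw [natDegree_X_pow]; exact hAD))
  have hdecay : (fun r => A.eval r / D.eval r) =O[atTop] fun r => r ^ (-2 : ℝ) := by
    refine ((isBigO_atTop_of_degree_le _ _ hdegree).mul
      (Asymptotics.isBigO_refl (fun r => (r ^ 2 * D.eval r)⁻¹) atTop)).congr' ?_ ?_
    all_goals
      filter_upwards [eventually_gt_atTop 0] with r hr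
      have := hD r hr.le
    · simp only [eval_mul, eval_pow, eval_X]
      field_simp
    · rw [Real.rpow_neg hr.le, Real.rpow_two]
      field_simp
  rw [← integrableOn_Ici_iff_integrableOn_Ioi]
  exact (hcont.locallyIntegrableOn measurableSet_Ici).integrableOn_of_isBigO_atTop hdecay
    ⟨Set.Ioi 1, Ioi_mem_atTop 1, integrableOn_Ioi_rpow_of_lt (by norm_num) one_pos⟩

lemma integrableOn_Ioi_eval_comp_sq_mul_pow_div {Q : ℝ[X]} {lam : ℝ} (hlam : 0 < lam) {c M : ℕ}
    (hdegree : 2 * Q.natDegree + c + 2 ≤ 2 * M) :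
    IntegrableOn (fun r => Q.eval (r ^ 2) * r ^ c / (lam ^ 2 + r ^ 2) ^ M) (Set.Ioi 0) := by
  have hnum : (Q.comp (X ^ 2) * X ^ c).natDegree ≤ 2 * Q.natDegree + c := by
    refine natDegree_mul_le.trans ?_
    rw [natDegree_comp, natDegree_X_pow, natDegree_X_pow, mul_comm]
  have hden : ((C (lam ^ 2) + X ^ 2 : ℝ[X]) ^ M).natDegree = 2 * M := by
    rw [natDegree_pow, add_comm, natDegree_X_pow_add_C, mul_comm]
  have h := integrableOn_Ioi_eval_div_eval (A := Q.comp (X ^ 2) * X ^ c)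
    (D := (C (lam ^ 2) + X ^ 2) ^ M) (fun x _ => ?_) (by omega)
  · simpa [eval_comp] using h
  · simp only [eval_pow, eval_add, eval_C, eval_X]
    positivity

lemma natDegree_X_mul_derivative_le (P : ℝ[X]) : (X * derivative P).natDegree ≤ P.natDegree := by
  rcases Nat.eq_zero_or_pos P.natDegree with h | h
  · simp [derivative_of_natDegree_zero h]
  · have := natDegree_derivative_lt h.ne'
    refine natDegree_mul_le.trans ?_
    rw [natDegree_X]
    omega

lemma integrableOn_Ioi_eval_comp_sq_sq_mul_pow_div {N : ℕ} {P : ℝ[X]} {lam : ℝ} (hlam : 0 < lam)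
    (hP : 4 * P.natDegree + 9 ≤ N) :
    IntegrableOn (fun r => P.eval (r ^ 2) ^ 2 * r ^ (N + 3) / (lam ^ 2 + r ^ 2) ^ (N - 2))
      (Set.Ioi 0) := by
  have hdegree : (P ^ 2).natDegree ≤ 2 * P.natDegree := natDegree_pow_le
  refine (integrableOn_Ioi_eval_comp_sq_mul_pow_div (Q := P ^ 2) hlam (c := N + 3) (M := N - 2)
    (by omega)).congr_fun (fun r _ => ?_) measurableSet_Ioi
  simp only [eval_pow]

lemma integrableOn_Ioi_quadraticCoeff_eval_mul_pow_div {N : ℕ} {P : ℝ[X]} {lam : ℝ} (hlam : 0 < lam)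
    (hP : 4 * P.natDegree + 9 ≤ N) :
    IntegrableOn (fun r => quadraticCoeff P.eval r * r ^ (N + 5) / (lam ^ 2 + r ^ 2) ^ (N - 2))
      (Set.Ioi 0) := by
  -- `quadraticCoeff P.eval r * r ^ 2 = Q (r ^ 2)` for the polynomial `Q = X P' (X P' + 2 P)`.
  have hXP := natDegree_X_mul_derivative_le P
  have hdegree : ((X * derivative P) * (X * derivative P + 2 * P)).natDegree
      ≤ P.natDegree + P.natDegree := by
    have h2 : (2 * P).natDegree ≤ P.natDegree := natDegree_C_mul_le 2 P
    exact natDegree_mul_le.trans (Nat.add_le_add hXP (natDegree_add_le_of_degree_le hXP h2))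
  refine (integrableOn_Ioi_eval_comp_sq_mul_pow_div
    (Q := (X * derivative P) * (X * derivative P + 2 * P)) hlam (c := N + 3) (M := N - 2)
    (by omega)).congr_fun (fun r _ => ?_) measurableSet_Ioi
  simp only [quadraticCoeff, Polynomial.deriv, eval_mul, eval_add, eval_X, eval_ofNat]
  ring

end PolynomialIntegrability

theorem stmt_16_general {N : ℕ} (hN : 4 ≤ N) {W : Fin N → Fin N → Fin N → Fin N → ℝ}
    (hW : ∀ i j, ∑ p, W i p j p = 0) {f : ℝ → ℝ} (hf : DifferentiableOn ℝ f (Set.Ioi 0))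
    {lam' : ℝ} (hlam' : 0 < lam') {u : EuclideanSpace ℝ (Fin N) → ℝ}
    (hu : ∀ y, u y = (lam' / (lam' ^ 2 + ‖y‖ ^ 2)) ^ (((N : ℝ) - 4) / 2))
    (hderiv : IntegrableOn (fun r => (r ^ 2 * deriv f (r ^ 2) ^ 2
      + 2 * f (r ^ 2) * deriv f (r ^ 2)) * r ^ (N + 5) / (lam' ^ 2 + r ^ 2) ^ (N - 2)) (Set.Ioi 0))
    (hsq : IntegrableOn (fun r => f (r ^ 2) ^ 2 * r ^ (N + 3) / (lam' ^ 2 + r ^ 2) ^ (N - 2))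
      (Set.Ioi 0)) :
    (∫ y : EuclideanSpace ℝ (Fin N),
        ∑ i : Fin N, ∑ l : Fin N, ∑ k : Fin N, ∑ m : Fin N,
          (pd N l (Hbar N W f m k) y) ^ 2 * (pd N i u y) ^ 2)
      = sphereArea N
          * (∑ i : Fin N, ∑ j : Fin N, ∑ k : Fin N, ∑ l : Fin N,
              (W i k j l + W i l j k) ^ 2)
          * lam' ^ (N - 4)
          * ((2 * ((N : ℝ) - 4) ^ 2 / (N * ((N : ℝ) + 2)))
              * (∫ r in Set.Ioi (0 : ℝ),
                  (r ^ 2 * deriv f (r ^ 2) ^ 2 + 2 * f (r ^ 2) * deriv f (r ^ 2))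
                    * r ^ (N + 5) / (lam' ^ 2 + r ^ 2) ^ (N - 2))
            + (((N : ℝ) - 4) ^ 2 / N)
              * (∫ r in Set.Ioi (0 : ℝ),
                  f (r ^ 2) ^ 2 * r ^ (N + 3) / (lam' ^ 2 + r ^ 2) ^ (N - 2))) := by
  have : NeZero N := ⟨by omega⟩
  let φ (r : ℝ) := r ^ 2 / (lam' ^ 2 + r ^ 2) ^ (N - 2)
  have hradial4 (r : ℝ) : (r ^ 2 * deriv f (r ^ 2) ^ 2 + 2 * f (r ^ 2) * deriv f (r ^ 2))
      * r ^ (N + 5) / (lam' ^ 2 + r ^ 2) ^ (N - 2) = φ r * quadraticCoeff f r * r ^ (N + 3) := by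
    simp only [φ, quadraticCoeff]
    ring
  have hradial2 (r : ℝ) : f (r ^ 2) ^ 2 * r ^ (N + 3) / (lam' ^ 2 + r ^ 2) ^ (N - 2)
      = φ r * f (r ^ 2) ^ 2 * r ^ (N + 1) := by
    simp only [φ]
    ring
  simp only [hradial4, hradial2] at hderiv hsq ⊢
  have henergy (y) : ∑ i, ∑ l, ∑ k, ∑ m, pd N l (Hbar N W f m k) y ^ 2 * pd N i u y ^ 2
      = ((N : ℝ) - 4) ^ 2 * lam' ^ (N - 4)
        * (φ ‖y‖ * ∑ i, ∑ j, ‖∇ (Hbar N W f i j) y‖ ^ 2) := by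
    rw [sum_pd_sq_mul_pd_sq (Hbar N W f), funext hu, norm_sq_gradient_bubble_natCast hN hlam',
      mul_assoc]
  simp only [henergy]
  rw [integral_const_mul, integral_radial_mul_sum_norm_sq_gradient_Hbar (φ := φ) hW hf
    (integrable_radial_mul_norm_pow_succ_iff.2 hderiv)
    (integrable_radial_mul_norm_pow_succ_iff.2 hsq),
    integral_radial_mul_norm_pow_succ (fun r => φ r * quadraticCoeff f r) 3,
    integral_radial_mul_norm_pow_succ (fun r => φ r * f (r ^ 2) ^ 2) 1]
  ring

theorem stmt_16 (N : ℕ) (hN : 25 ≤ N)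
    (W : Fin N → Fin N → Fin N → Fin N → ℝ)
    (hW1 : ∀ i p j q, W i p j q = - W p i j q)
    (hW2 : ∀ i p j q, W i p j q = - W i p q j)
    (hW3 : ∀ i p j q, W i p j q = W j q i p)
    (hBianchi : ∀ i p j q, W i p j q + W i j q p + W i q p j = 0)
    (hTrace : ∀ p q, ∑ i : Fin N, W i p i q = 0)
    (f : ℝ → ℝ)
    (hf : ∃ P : Polynomial ℝ, P.degree ≤ 4 ∧ ∀ x, f x = P.eval x)
    (lam' : ℝ) (hlam' : 0 < lam')
    (u : EuclideanSpace ℝ (Fin N) → ℝ)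
    (hu : ∀ y, u y = (lam' / (lam' ^ 2 + ‖y‖ ^ 2)) ^ (((N : ℝ) - 4) / 2)) :
    (∫ y : EuclideanSpace ℝ (Fin N),
        ∑ i : Fin N, ∑ l : Fin N, ∑ k : Fin N, ∑ m : Fin N,
          (pd N l (Hbar N W f m k) y) ^ 2 * (pd N i u y) ^ 2)
      = sphereArea N
          * (∑ i : Fin N, ∑ j : Fin N, ∑ k : Fin N, ∑ l : Fin N,
              (W i k j l + W i l j k) ^ 2)
          * lam' ^ (N - 4)
          * ((2 * ((N : ℝ) - 4) ^ 2 / (N * ((N : ℝ) + 2)))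
              * (∫ r in Set.Ioi (0 : ℝ),
                  (r ^ 2 * deriv f (r ^ 2) ^ 2 + 2 * f (r ^ 2) * deriv f (r ^ 2))
                    * r ^ (N + 5) / (lam' ^ 2 + r ^ 2) ^ (N - 2))
            + (((N : ℝ) - 4) ^ 2 / N)
              * (∫ r in Set.Ioi (0 : ℝ),
                  f (r ^ 2) ^ 2 * r ^ (N + 3) / (lam' ^ 2 + r ^ 2) ^ (N - 2))) := by
  obtain ⟨P, hPdeg, hP⟩ := hf
  obtain rfl : f = P.eval := funext hP
  have hPN : 4 * P.natDegree + 9 ≤ N := by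
    have : P.natDegree ≤ 4 := Polynomial.natDegree_le_of_degree_le hPdeg
    omega
  have hW (i j) : ∑ p, W i p j p = 0 := by
    rw [← hTrace i j]
    exact Finset.sum_congr rfl fun p _ => by rw [hW1, hW2, neg_neg]
  exact stmt_16_general (by omega) hW P.differentiable.differentiableOn hlam' hu
    (integrableOn_Ioi_quadraticCoeff_eval_mul_pow_div hlam' hPN)
    (integrableOn_Ioi_eval_comp_sq_sq_mul_pow_div hlam' hPN)
end
end
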